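/- For every integer n ≥ 1, C^2_{2,n} = Σ_{j=0}^{n} binom(n+j−1, 2j) = F_{2n−1}, where F_m denotes the m-th Fibonacci number (F_1 = F_2 = 1, F_m = F_{m−1} + F_{m−2}). -/

import Mathlib

/-- Full binary trees (every internal node has exactly two children). -/
inductive BTree : Type
  | leaf : BTree
  | node : BTree → BTree → BTree
deriving DecidableEq

namespace BTree

/-- Number of leaves of a full binary tree. -/
def numLeaves : BTree → ℕ
  | leaf => 1
  | node l r => l.numLeaves + r.numLeaves

/-- The list of pairs (left depth, right depth) of the leaves, in preorder. -/
def leafDepths : BTree → List (ℕ × ℕ)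
  | leaf => [(0, 0)]
  | node l r =>
      (l.leafDepths.map fun p => (p.1 + 1, p.2)) ++ (r.leafDepths.map fun p => (p.1, p.2 + 1))

/-- The left depth sequence `ld(t)` of the leaves of `t`, in preorder. -/
def ld (t : BTree) : List ℕ := t.leafDepths.map Prod.fst

/-- The right depth sequence `rd(t)` of the leaves of `t`, in preorder. -/
def rd (t : BTree) : List ℕ := t.leafDepths.map Prod.snd

end BTree

/-- `b ~^d c` : the sequences have equal length and agree at every position where
either entry is `< d`. -/
def DepthEq (d : ℕ) : List ℕ → List ℕ → Prop :=
  List.Forall₂ (fun a b => min a b < d → a = b)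

/-- `b ~_k c` : entrywise congruence mod `k` (and equal length). -/
def ModListEq (k : ℕ) : List ℕ → List ℕ → Prop :=
  List.Forall₂ (fun a b => a % k = b % k)

/-- The relation `t ~ t'` iff `ld(t) ~^d ld(t')` and `rd(t) ~^e rd(t')`. -/
def DeRel (d e : ℕ) (t t' : BTree) : Prop :=
  DepthEq d t.ld t'.ld ∧ DepthEq e t.rd t'.rd

/-- The relation `t ~ t'` iff `ld(t) ~_k^d ld(t')` (i.e. `ld(t) ~_k ld(t')` and
`ld(t) ~^d ld(t')`). -/
def DkRel (d k : ℕ) (t t' : BTree) : Prop :=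
  ModListEq k t.ld t'.ld ∧ DepthEq d t.ld t'.ld

/-- `T_n`: full binary trees with `n+1` leaves. -/
def Tn (n : ℕ) : Type := {t : BTree // t.numLeaves = n + 1}

/-- `C^{d,e}_n`: the number of equivalence classes of the relation `DeRel d e` on `T_n`. -/
noncomputable def Cde (d e n : ℕ) : ℕ :=
  Nat.card (Quot (fun t t' : Tn n => DeRel d e t.1 t'.1))

/-- `C^d_{k,n}`: the number of equivalence classes of `ld(t) ~_k^d ld(t')` on `T_n`. -/
noncomputable def Cdk (d k n : ℕ) : ℕ :=
  Nat.card (Quot (fun t t' : Tn n => DkRel d k t.1 t'.1))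

/-!
Reading from right to left, the left depth sequences are exactly the words that start with `0` and
in which each new entry `x`, written to the left of `y`, satisfies `1 ≤ x ≤ y + 1`. For `d = k = 2`
the class of an entry is its code: `0`, `1`, `2` (even and at least `2`) or `3` (odd and at least
`3`). Whenever `y ≥ 1`, the codes available for `x` depend only on the code of `y`: the codes `1`
and `2` always occur, and `3` occurs iff `y ≥ 2`. So, if `c` counts the words of codes and `h` those
with first letter at least `2`, one more letter turns `(c, h)` into `(2c + h, c + h)`, which is two
steps of the Fibonacci recursion.
-/

/-- The sequences `(b₀, …, bₙ)` with `bₙ = 0` and `1 ≤ bᵢ ≤ bᵢ₊₁ + 1` for `i < n`, which are the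
left depth sequences of full binary trees; built from the right, as the bound on an entry involves
its right neighbour. -/
inductive IsLeftDepthSeq : List ℕ → Prop
  | zero : IsLeftDepthSeq [0]
  | cons {x y : ℕ} {L : List ℕ} :
      IsLeftDepthSeq (y :: L) → 1 ≤ x → x ≤ y + 1 → IsLeftDepthSeq (x :: y :: L)

namespace IsLeftDepthSeq

theorem ne_nil {L : List ℕ} (hL : IsLeftDepthSeq L) : L ≠ [] := by
  cases hL <;> exact List.cons_ne_nil _ _

theorem one_le_head {y : ℕ} {L : List ℕ} (h : IsLeftDepthSeq (y :: L)) (hL : L ≠ []) : 1 ≤ y := by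
  cases h with
  | zero => exact absurd rfl hL
  | cons _ hy _ => exact hy

theorem map_succ_append {L M : List ℕ} (hL : IsLeftDepthSeq L) (hM : IsLeftDepthSeq M) :
    IsLeftDepthSeq (L.map (· + 1) ++ M) := by
  induction hL with
  | zero => cases hM with
    | zero => exact zero.cons le_rfl le_rfl
    | cons hM hx hxy => exact (hM.cons hx hxy).cons le_rfl (Nat.le_add_left 1 _)
  | cons _ _ hxy ih => exact ih.cons (Nat.le_add_left 1 _) (Nat.succ_le_succ hxy)

theorem cons_cons_iff {x y : ℕ} {L : List ℕ} :
    IsLeftDepthSeq (x :: y :: L) ↔ IsLeftDepthSeq (y :: L) ∧ 1 ≤ x ∧ x ≤ y + 1 :=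
  ⟨fun | cons hL hx hxy => ⟨hL, hx, hxy⟩, fun ⟨hL, hx, hxy⟩ => hL.cons hx hxy⟩

end IsLeftDepthSeq

namespace BTree

theorem ld_leaf : leaf.ld = [0] := rfl

theorem ld_node (l r : BTree) : (node l r).ld = l.ld.map (· + 1) ++ r.ld := by
  simp [ld, leafDepths, Function.comp_def]

theorem length_ld (t : BTree) : t.ld.length = t.numLeaves := by
  induction t with
  | leaf => rfl
  | node l r ihl ihr => simp [ld_node, numLeaves, ihl, ihr]

theorem isLeftDepthSeq_ld (t : BTree) : IsLeftDepthSeq t.ld := by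
  induction t with
  | leaf => exact .zero
  | node l r ihl ihr => exact ld_node l r ▸ ihl.map_succ_append ihr

theorem exists_ld_eq_cons {x y : ℕ} {L : List ℕ} (t : BTree) (ht : t.ld = y :: L) (hx : 1 ≤ x)
    (hxy : x ≤ y + 1) : ∃ t' : BTree, t'.ld = x :: y :: L := by
  induction t generalizing x y L with
  | leaf =>
    obtain ⟨rfl, rfl⟩ : 0 = y ∧ [] = L := by simpa [ld_leaf] using ht
    obtain rfl : x = 1 := le_antisymm hxy hx
    exact ⟨node leaf leaf, rfl⟩
  | node l r ihl _ =>
    obtain rfl | hx := hx.eq_or_lt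
    · exact ⟨node leaf (node l r), by simp [ld_node leaf, ld_leaf, ht]⟩
    · obtain ⟨z, M, hl⟩ := List.exists_cons_of_ne_nil l.isLeftDepthSeq_ld.ne_nil
      obtain ⟨rfl, rfl⟩ : z + 1 = y ∧ M.map (· + 1) ++ r.ld = L := by
        simpa [ld_node, hl] using ht
      obtain ⟨x, rfl⟩ := Nat.exists_eq_add_of_lt hx
      obtain ⟨l', hl'⟩ := ihl (x := 1 + x) hl (Nat.le_add_right 1 x) (Nat.le_of_succ_le_succ hxy)
      exact ⟨node l' r, by simp [ld_node, hl']⟩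

theorem exists_ld_eq_iff {L : List ℕ} : (∃ t : BTree, t.ld = L) ↔ IsLeftDepthSeq L := by
  refine ⟨fun ⟨t, ht⟩ => ht ▸ t.isLeftDepthSeq_ld, fun hL => ?_⟩
  induction hL with
  | zero => exact ⟨leaf, rfl⟩
  | cons _ hx hxy ih =>
    obtain ⟨t, ht⟩ := ih
    exact exists_ld_eq_cons t ht hx hxy

end BTree

/-- A complete invariant of the entrywise relation underlying `~_k^d`: entries below `d` are kept,
and the others are replaced by their residue mod `k`, shifted by `d` to keep the two kinds apart. -/
def depthCode (d k x : ℕ) : ℕ := if x < d then x else d + x % k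

theorem depthCode_eq_iff {d k a b : ℕ} :
    depthCode d k a = depthCode d k b ↔ a % k = b % k ∧ (min a b < d → a = b) := by
  grind [depthCode]

theorem le_depthCode_iff {d k x : ℕ} : d ≤ depthCode d k x ↔ d ≤ x := by
  grind [depthCode]

theorem dkRel_iff {d k : ℕ} {t t' : BTree} :
    DkRel d k t t' ↔ t.ld.map (depthCode d k) = t'.ld.map (depthCode d k) := by
  rw [DkRel, ModListEq, DepthEq]
  generalize t.ld = L, t'.ld = M
  induction L generalizing M with
  | nil => cases M <;> simp
  | cons a L ih =>
    cases M with
    | nil => simp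
    | cons b M =>
      simp only [List.forall₂_cons, List.map_cons, List.cons.injEq, depthCode_eq_iff, ← ih]
      tauto

/-- The words that encode the `~_k^d`-classes of the left depth sequences of the trees in `T_n`. -/
def codeWords (d k n : ℕ) : Set (List ℕ) :=
  List.map (depthCode d k) '' {L | IsLeftDepthSeq L ∧ L.length = n + 1}

theorem range_map_depthCode_ld (d k n : ℕ) :
    Set.range (fun t : Tn n => t.1.ld.map (depthCode d k)) = codeWords d k n := by
  ext w
  constructor
  · rintro ⟨⟨t, ht⟩, rfl⟩
    exact ⟨t.ld, ⟨t.isLeftDepthSeq_ld, t.length_ld.trans ht⟩, rfl⟩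
  · rintro ⟨L, ⟨hL, hlen⟩, rfl⟩
    obtain ⟨t, rfl⟩ := BTree.exists_ld_eq_iff.2 hL
    exact ⟨⟨t, t.length_ld.symm.trans hlen⟩, rfl⟩

theorem Cdk_eq_ncard_codeWords (d k n : ℕ) : Cdk d k n = (codeWords d k n).ncard := by
  let code : Tn n → List ℕ := fun t => t.1.ld.map (depthCode d k)
  have hker : (fun t t' : Tn n => DkRel d k t.1 t'.1) = (Setoid.ker code).r := by
    ext t t'
    exact dkRel_iff
  rw [Cdk, hker, ← range_map_depthCode_ld, ← Nat.card_coe_set_eq]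
  exact Nat.card_congr (Setoid.quotientKerEquivRange code)

theorem mem_codeWords_succ {d k n : ℕ} {w : List ℕ} :
    w ∈ codeWords d k (n + 1) ↔ ∃ x y L, (IsLeftDepthSeq (y :: L) ∧ L.length = n) ∧
      (1 ≤ x ∧ x ≤ y + 1) ∧ (x :: y :: L).map (depthCode d k) = w := by
  constructor
  · rintro ⟨_ | ⟨x, _ | ⟨y, L⟩⟩, ⟨hL, hlen⟩, rfl⟩
    · simp at hlen
    · simp at hlen
    · obtain ⟨hL, hx⟩ := IsLeftDepthSeq.cons_cons_iff.1 hL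
      exact ⟨x, y, L, ⟨hL, by simpa using hlen⟩, hx, rfl⟩
  · rintro ⟨x, y, L, ⟨hL, rfl⟩, hx, rfl⟩
    exact ⟨x :: y :: L, ⟨IsLeftDepthSeq.cons_cons_iff.2 ⟨hL, hx⟩, rfl⟩, rfl⟩

theorem codeWords_one (d k : ℕ) : codeWords d k 1 = {[depthCode d k 1, depthCode d k 0]} := by
  ext w
  simp only [mem_codeWords_succ, List.length_eq_zero_iff, Set.mem_singleton_iff]
  constructor
  · rintro ⟨x, y, L, ⟨hL, rfl⟩, ⟨hx, hxy⟩, rfl⟩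
    cases hL
    obtain rfl : x = 1 := le_antisymm hxy hx
    rfl
  · rintro rfl
    exact ⟨1, 0, [], ⟨.zero, rfl⟩, ⟨le_rfl, le_rfl⟩, rfl⟩

/-- The words in `codeWords 2 2 n` that come from sequences with first entry at least `2`. -/
def highCodeWords (n : ℕ) : Set (List ℕ) := {w ∈ codeWords 2 2 n | 2 ≤ w.headI}

theorem exists_depthCode_eq_iff {y a : ℕ} (hy : 1 ≤ y) :
    (∃ x, (1 ≤ x ∧ x ≤ y + 1) ∧ depthCode 2 2 x = a) ↔ a = 1 ∨ a = 2 ∨ a = 3 ∧ 2 ≤ y := by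
  constructor
  · grind [depthCode]
  -- One of `y` and `y + 1` has the required parity.
  · rintro (rfl | rfl | ⟨rfl, hy2⟩)
    · exact ⟨1, by grind [depthCode]⟩
    · exact ⟨y + y % 2, by grind [depthCode]⟩
    · exact ⟨y + (y + 1) % 2, by grind [depthCode]⟩

theorem mem_codeWords_add_two {n : ℕ} {v : List ℕ} :
    v ∈ codeWords 2 2 (n + 2) ↔
      ∃ a, ∃ w ∈ codeWords 2 2 (n + 1), (a = 1 ∨ a = 2 ∨ a = 3 ∧ 2 ≤ w.headI) ∧ a :: w = v := by
  constructor
  · intro hv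
    obtain ⟨x, y, L, ⟨hL, hlen⟩, hx, rfl⟩ := mem_codeWords_succ.1 hv
    have hy : 1 ≤ y := hL.one_le_head (List.ne_nil_of_length_eq_add_one hlen)
    refine ⟨_, _, ⟨y :: L, ⟨hL, by simp [hlen]⟩, rfl⟩, ?_, rfl⟩
    simpa [le_depthCode_iff] using (exists_depthCode_eq_iff hy).1 ⟨x, hx, rfl⟩
  · rintro ⟨a, _, ⟨_ | ⟨y, L⟩, ⟨hL, hlen⟩, rfl⟩, ha, rfl⟩
    · simp at hlen
    · have hlen : L.length = n + 1 := by simpa using hlen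
      have hy : 1 ≤ y := hL.one_le_head (List.ne_nil_of_length_eq_add_one hlen)
      obtain ⟨x, hx, rfl⟩ := (exists_depthCode_eq_iff hy).2 (by simpa [le_depthCode_iff] using ha)
      exact mem_codeWords_succ.2 ⟨x, y, L, ⟨hL, hlen⟩, hx, rfl⟩

theorem codeWords_add_two (n : ℕ) :
    codeWords 2 2 (n + 2) = List.cons 1 '' codeWords 2 2 (n + 1) ∪ highCodeWords (n + 2) := by
  ext v
  simp only [highCodeWords, Set.mem_union, Set.mem_image, Set.mem_ofPred_eq, mem_codeWords_add_two]
  grind [List.headI]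

theorem highCodeWords_add_two (n : ℕ) :
    highCodeWords (n + 2) =
      List.cons 2 '' codeWords 2 2 (n + 1) ∪ List.cons 3 '' highCodeWords (n + 1) := by
  ext v
  simp only [highCodeWords, Set.mem_union, Set.mem_image, Set.mem_ofPred_eq, mem_codeWords_add_two]
  grind [List.headI]

theorem highCodeWords_one : highCodeWords 1 = ∅ := by
  ext w
  simp only [highCodeWords, codeWords_one, Set.mem_singleton_iff, Set.mem_ofPred_eq]
  grind [depthCode, List.headI]

theorem encard_codeWords_succ (n : ℕ) :
    (codeWords 2 2 (n + 1)).encard = Nat.fib (2 * n + 1) ∧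
      (highCodeWords (n + 1)).encard = Nat.fib (2 * n) := by
  induction n with
  | zero => simp [codeWords_one, highCodeWords_one]
  | succ n ih =>
    obtain ⟨hcode, hhigh⟩ := ih
    have hdisj_high : Disjoint (List.cons 2 '' codeWords 2 2 (n + 1))
        (List.cons 3 '' highCodeWords (n + 1)) :=
      Set.disjoint_left.2 (by rintro _ ⟨v, _, rfl⟩ ⟨w, _, h⟩; simp at h)
    have hdisj : Disjoint (List.cons 1 '' codeWords 2 2 (n + 1)) (highCodeWords (n + 2)) :=
      Set.disjoint_left.2 (by rintro _ ⟨v, _, rfl⟩ ⟨_, h⟩; simp at h)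
    have hhigh' : (highCodeWords (n + 2)).encard = Nat.fib (2 * n + 2) := by
      rw [highCodeWords_add_two, Set.encard_union_eq hdisj_high, List.cons_injective.encard_image,
        List.cons_injective.encard_image, hcode, hhigh, Nat.fib_add_two, Nat.cast_add, add_comm]
    refine ⟨?_, hhigh'⟩
    rw [codeWords_add_two, Set.encard_union_eq hdisj, List.cons_injective.encard_image, hcode,
      hhigh', show 2 * (n + 1) + 1 = 2 * n + 1 + 2 by ring, Nat.fib_add_two (n := 2 * n + 1),
      Nat.cast_add]

theorem fib_two_mul_add_one_eq_sum_choose (m : ℕ) :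
    Nat.fib (2 * m + 1) = ∑ j ∈ Finset.range (m + 1), (m + j).choose (2 * j) := by
  rw [Nat.fib_succ_eq_sum_choose, Finset.Nat.sum_antidiagonal_eq_sum_range_succ Nat.choose,
    show (2 * m).succ = m + (m + 1) by omega, Finset.sum_range_add]
  have hlow : ∑ i ∈ Finset.range m, i.choose (2 * m - i) = 0 :=
    Finset.sum_eq_zero fun i hi => Nat.choose_eq_zero_of_lt <| by
      have him : i < m := Finset.mem_range.1 hi
      omega
  rw [hlow, zero_add]
  refine Finset.sum_congr rfl fun j hj => Nat.choose_symm_of_eq_add ?_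
  have hjm : j < m + 1 := Finset.mem_range.1 hj
  omega

/-- for `n ≥ 1`, `C^2_{2,n} = Σ_{j=0}^{n} binom(n+j-1, 2j) = F_{2n-1}`
(Fibonacci numbers with `F_1 = F_2 = 1`, matching `Nat.fib`). -/
theorem stmt19 (n : ℕ) (hn : 1 ≤ n) :
    Cdk 2 2 n = ∑ j ∈ Finset.range (n + 1), (n + j - 1).choose (2 * j) ∧
    Cdk 2 2 n = Nat.fib (2 * n - 1) := by
  obtain ⟨m, rfl⟩ := Nat.exists_eq_add_of_le' hn
  have hcard : Cdk 2 2 (m + 1) = Nat.fib (2 * m + 1) := by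
    rw [Cdk_eq_ncard_codeWords, Set.ncard, (encard_codeWords_succ m).1, ENat.toNat_natCast]
  have hlast : (m + (m + 1)).choose (2 * (m + 1)) = 0 := Nat.choose_eq_zero_of_lt (by omega)
  refine ⟨?_, hcard⟩
  simp only [Nat.add_right_comm m 1, Nat.add_sub_cancel]
  rw [hcard, Finset.sum_range_succ, hlast, add_zero, fib_two_mul_add_one_eq_sum_choose]
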